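/- arXiv:2005.02520 — 3 statements merged into one kernel-verified Lean document; each statement's English description precedes it below -/
import Mathlib

section
/- Let R be a commutative Noetherian ring, let I be a finitely generated flat R-module, and let (S_n)_{n∈ℕ} be a sequence of R-modules equipped with surjective R-linear transition maps t_n : S_{n+1} → S_n. Then the canonical R-linear map I ⊗_R (lim_n S_n) → lim_n (I ⊗_R S_n), determined by x ⊗ (s_n)_n ↦ (x ⊗ s_n)_n, is bijective. -/
/-!
A finitely generated flat module over a Noetherian ring is finite projective. For such `I`, the
functor `I ⊗ -` is naturally isomorphic to `Hom(I*, -)`, where `I*` is the dual of `I`, and a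
`Hom` functor commutes with limits by the universal property of the limit.
-/

/-- The inverse limit of an inverse system of `R`-modules `(S n)` with transition maps
`t n : S (n+1) → S n`, realized as the submodule of compatible families in the product. -/
def invLim {R : Type*} [CommRing R] {S : ℕ → Type*} [∀ n, AddCommGroup (S n)]
    [∀ n, Module R (S n)] (t : ∀ n, S (n + 1) →ₗ[R] S n) : Submodule R (∀ n, S n) where
  carrier := {s | ∀ n, t n (s (n + 1)) = s n}
  add_mem' := by
    intro a b ha hb n
    simp [ha n, hb n]
  zero_mem' := by
    intro n
    simp
  smul_mem' := by
    intro c a ha n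
    simp [ha n]

/-- The canonical map `I ⊗ (lim S n) → lim (I ⊗ S n)`, determined by
`x ⊗ (s n)ₙ ↦ (x ⊗ s n)ₙ`. -/
noncomputable def tensorInvLimMap {R : Type*} [CommRing R]
    (I : Type*) [AddCommGroup I] [Module R I]
    {S : ℕ → Type*} [∀ n, AddCommGroup (S n)] [∀ n, Module R (S n)]
    (t : ∀ n, S (n + 1) →ₗ[R] S n) :
    TensorProduct R I ↥(invLim t) →ₗ[R]
      ↥(invLim (S := fun n => TensorProduct R I (S n)) (fun n => LinearMap.lTensor I (t n))) :=
  TensorProduct.lift <| LinearMap.mk₂ R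
    (fun x s =>
      (⟨fun n => x ⊗ₜ[R] (s : ∀ n, S n) n, fun n => by
          have hs : t n ((s : ∀ n, S n) (n + 1)) = (s : ∀ n, S n) n := s.2 n
          simp only [LinearMap.lTensor_tmul, hs]⟩ :
        ↥(invLim (S := fun n => TensorProduct R I (S n)) (fun n => LinearMap.lTensor I (t n)))))
    (fun x y s => Subtype.ext (funext fun n => by
      simp [TensorProduct.add_tmul]))
    (fun c x s => Subtype.ext (funext fun n => by
      simp [TensorProduct.smul_tmul']))
    (fun x s s' => Subtype.ext (funext fun n => by
      simp [TensorProduct.tmul_add]))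
    (fun c x s => Subtype.ext (funext fun n => by
      simp [TensorProduct.tmul_smul]))

open Module TensorProduct

namespace invLim

variable {R P : Type*} [CommRing R] [AddCommGroup P] [Module R P]
  {S : ℕ → Type*} [∀ n, AddCommGroup (S n)] [∀ n, Module R (S n)]
  (t : ∀ n, S (n + 1) →ₗ[R] S n)

/-- The canonical projection from the inverse limit to the `n`-th module of the system. -/
def proj (n : ℕ) : invLim t →ₗ[R] S n :=
  LinearMap.proj n ∘ₗ (invLim t).subtype

/-- The map into the inverse limit induced by a compatible family of linear maps. -/
def lift (φ : ∀ n, P →ₗ[R] S n) (hφ : ∀ n, t n ∘ₗ φ (n + 1) = φ n) : P →ₗ[R] invLim t :=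
  (LinearMap.pi φ).codRestrict (invLim t) fun p n ↦ LinearMap.congr_fun (hφ n) p

variable {t}

theorem ext {s s' : invLim t} (h : ∀ n, proj t n s = proj t n s') : s = s' :=
  Subtype.ext (funext h)

theorem hom_ext {φ ψ : P →ₗ[R] invLim t} (h : ∀ n, proj t n ∘ₗ φ = proj t n ∘ₗ ψ) : φ = ψ :=
  LinearMap.ext fun p ↦ ext fun n ↦ LinearMap.congr_fun (h n) p

theorem apply_proj_succ (s : invLim t) (n : ℕ) : t n (proj t (n + 1) s) = proj t n s :=
  s.2 n

theorem proj_comp_lift (φ : ∀ n, P →ₗ[R] S n) (hφ : ∀ n, t n ∘ₗ φ (n + 1) = φ n) (n : ℕ) :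
    proj t n ∘ₗ lift t φ hφ = φ n :=
  rfl

end invLim

section TensorEquivDualHom

variable {R : Type*} [CommSemiring R] (I M : Type*) {N : Type*}
  [AddCommMonoid I] [Module R I] [Module.Finite R I] [Projective R I]
  [AddCommMonoid M] [Module R M] [AddCommMonoid N] [Module R N]

/-- The isomorphism `I ⊗ M ≃ Hom(I*, M)`, `x ⊗ m ↦ (f ↦ f x • m)`, for `I` finite projective. -/
noncomputable def tensorEquivDualHom : I ⊗[R] M ≃ₗ[R] (Dual R I →ₗ[R] M) :=
  (evalEquiv R I).rTensor M ≪≫ₗ dualTensorHomEquiv R (Dual R I) M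

variable {I M}

theorem tensorEquivDualHom_tmul_apply (x : I) (m : M) (f : Dual R I) :
    tensorEquivDualHom I M (x ⊗ₜ m) f = f x • m := by
  simp [tensorEquivDualHom]

theorem tensorEquivDualHom_lTensor (g : M →ₗ[R] N) (z : I ⊗[R] M) :
    tensorEquivDualHom I N (g.lTensor I z) = g ∘ₗ tensorEquivDualHom I M z := by
  induction z with
  | zero => simp
  | tmul x m => ext f; simp [tensorEquivDualHom_tmul_apply]
  | add z w hz hw => simp only [map_add, hz, hw, LinearMap.comp_add]

end TensorEquivDualHom

section TensorInvLim

variable {R : Type*} [CommRing R] (I : Type*) [AddCommGroup I] [Module R I]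
  {S : ℕ → Type*} [∀ n, AddCommGroup (S n)] [∀ n, Module R (S n)]
  (t : ∀ n, S (n + 1) →ₗ[R] S n)

theorem proj_comp_tensorInvLimMap (n : ℕ) :
    invLim.proj (S := fun n ↦ I ⊗[R] S n) (fun n ↦ (t n).lTensor I) n ∘ₗ tensorInvLimMap I t =
      (invLim.proj t n).lTensor I :=
  TensorProduct.ext' fun _ _ ↦ rfl

variable [Module.Finite R I] [Projective R I]

theorem tensorEquivDualHom_proj_tensorInvLimMap (z : I ⊗[R] invLim t) (n : ℕ) :
    tensorEquivDualHom I (S n) (invLim.proj _ n (tensorInvLimMap I t z)) =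
      invLim.proj t n ∘ₗ tensorEquivDualHom I (invLim t) z := by
  rw [← tensorEquivDualHom_lTensor, ← proj_comp_tensorInvLimMap, LinearMap.comp_apply]

theorem tensorInvLimMap_injective : Function.Injective (tensorInvLimMap I t) := by
  intro z w hzw
  refine (tensorEquivDualHom I (invLim t)).injective (invLim.hom_ext fun n ↦ ?_)
  rw [← tensorEquivDualHom_proj_tensorInvLimMap, hzw, tensorEquivDualHom_proj_tensorInvLimMap]

theorem tensorInvLimMap_surjective : Function.Surjective (tensorInvLimMap I t) := by
  intro y
  let φ (n : ℕ) : Dual R I →ₗ[R] S n := tensorEquivDualHom I (S n) (invLim.proj _ n y)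
  have hφ (n : ℕ) : t n ∘ₗ φ (n + 1) = φ n := by
    rw [← tensorEquivDualHom_lTensor, invLim.apply_proj_succ y n]
  refine ⟨(tensorEquivDualHom I (invLim t)).symm (invLim.lift t φ hφ), ?_⟩
  refine invLim.ext fun n ↦ (tensorEquivDualHom I (S n)).injective ?_
  rw [tensorEquivDualHom_proj_tensorInvLimMap, LinearEquiv.apply_symm_apply,
    invLim.proj_comp_lift]

theorem tensorInvLimMap_bijective_general : Function.Bijective (tensorInvLimMap I t) :=
  ⟨tensorInvLimMap_injective I t, tensorInvLimMap_surjective I t⟩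

end TensorInvLim

/-- If `R` is a commutative Noetherian ring, `I` a finitely generated flat `R`-module, and
`(S n)` an inverse system of `R`-modules with surjective transition maps, then the canonical
map `I ⊗_R (lim S n) → lim (I ⊗_R S n)` is bijective. -/
theorem tensorInvLimMap_bijective {R : Type*} [CommRing R] [IsNoetherianRing R]
    (I : Type*) [AddCommGroup I] [Module R I] [Module.Finite R I] [Module.Flat R I]
    {S : ℕ → Type*} [∀ n, AddCommGroup (S n)] [∀ n, Module R (S n)]
    (t : ∀ n, S (n + 1) →ₗ[R] S n) (ht : ∀ n, Function.Surjective (t n)) :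
    Function.Bijective (tensorInvLimMap I t) := by
  have : Module.Projective R I :=
    have := Module.finitePresentation_of_finite R I
    Module.Flat.projective_of_finitePresentation
  exact tensorInvLimMap_bijective_general I t
end

section
/- Let K be an algebraically closed field of characteristic zero, let G be a finite abelian group, and let M be a flat module over the group algebra K[G]. Then an element x ∈ M is zero if and only if, for every group homomorphism χ : G → Kˣ, the image of x under the canonical map M → M ⊗_{K[G]} K_χ is zero. -/
/-- Given a group homomorphism `χ : G → Kˣ`, the induced `K`-algebra homomorphism
`φ_χ : K[G] → K` sending each group element `g` to `χ g`. -/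
noncomputable def charAlgHom (K : Type*) [CommRing K] (G : Type*) [CommGroup G]
    (χ : G →* Kˣ) : MonoidAlgebra K G →ₐ[K] K :=
  MonoidAlgebra.lift K K G ((Units.coeHom K).comp χ)

/-!
For each character `χ`, the element `e_χ = ∑ g, χ(g)⁻¹ g` of `K[G]` satisfies
`a * e_χ = φ_χ(a) e_χ`, so `c ↦ c e_χ` is a `K[G]`-linear map `K_χ → K[G]`. Tensoring it with `M`
sends `x ⊗ 1` to `e_χ x`, so `e_χ x = 0` for every `χ`. Since `∑ χ, e_χ = |G|` by
orthogonality of characters, `|G| x = 0`, and `|G|` is invertible in `K`.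
-/

theorem isSMulRegular_nat_of_algebra_charZero (K A : Type*) {M : Type*} [Semifield K] [CharZero K]
    [Semiring A] [Algebra K A] [AddCommMonoid M] [Module A M] {n : ℕ} (hn : n ≠ 0) :
    IsSMulRegular M n := by
  have isUnit_natCast : IsUnit (n : A) := by
    simpa using (IsUnit.mk0 (n : K) (Nat.cast_ne_zero.mpr hn)).map (algebraMap K A)
  intro x y hxy
  exact isUnit_natCast.isSMulRegular M (by simpa only [Nat.cast_smul_eq_nsmul] using hxy)

theorem smul_eq_zero_of_tmul_one_eq_zero {R A M : Type*} [CommSemiring R] [CommSemiring A]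
    [Algebra R A] [AddCommMonoid M] [Module A M] (φ : A →+* R) {e : A}
    (he : ∀ a, a * e = φ a • e) {x : M}
    (hx : letI : Module A R := Module.compHom R φ
      (x ⊗ₜ[A] (1 : R) : TensorProduct A M R) = 0) :
    e • x = 0 := by
  let : Module A R := Module.compHom R φ
  let toMultiples : R →ₗ[A] A :=
    { toFun := fun c => c • e
      map_add' := fun c d => add_smul c d e
      map_smul' := fun a c => by
        change (φ a * c) • e = a * c • e
        rw [mul_smul_comm, he, smul_smul, mul_comm] }
  simpa [toMultiples] using
    congrArg (fun t => TensorProduct.rid A M (toMultiples.lTensor M t)) hx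

section Characters

variable {R G : Type*} [CommRing R] [CommGroup G]

/-- The `χ`-twisted norm element `∑ g, χ(g)⁻¹ g` of the group algebra, which is `|G|` times the
idempotent of `χ` when `|G|` is invertible. -/
noncomputable def twistedNorm [Fintype G] (χ : G →* Rˣ) : MonoidAlgebra R G :=
  ∑ g : G, MonoidAlgebra.single g (χ g⁻¹ : R)

theorem mul_twistedNorm [Fintype G] (χ : G →* Rˣ) (a : MonoidAlgebra R G) :
    a * twistedNorm χ = charAlgHom R G χ a • twistedNorm χ := by
  induction a using MonoidAlgebra.induction_linear with
  | zero => simp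
  | add a b ha hb => rw [add_mul, ha, hb, map_add, add_smul]
  | single h c =>
    simp only [twistedNorm, charAlgHom, Finset.mul_sum, Finset.smul_sum]
    refine Fintype.sum_equiv (Equiv.mulLeft h) _ _ fun g => ?_
    simp [mul_inv, -mul_inv_rev, mul_assoc]

variable [IsDomain R] [HasEnoughRootsOfUnity R (Monoid.exponent G)]

theorem sum_character_apply_eq_zero [Finite G] [Fintype (G →* Rˣ)] {g : G} (hg : g ≠ 1) :
    ∑ χ : G →* Rˣ, (χ g : R) = 0 := by
  obtain ⟨ψ, hψ⟩ := CommGroup.exists_apply_ne_one_of_hasEnoughRootsOfUnity G R hg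
  refine sum_hom_units_eq_zero ((Units.coeHom R).comp (MonoidHom.eval g)) fun h => hψ ?_
  exact Units.ext (DFunLike.congr_fun h ψ)

theorem sum_twistedNorm [Fintype G] [Fintype (G →* Rˣ)] :
    ∑ χ : G →* Rˣ, twistedNorm χ = (Nat.card G : MonoidAlgebra R G) := by
  have sum_coeff (g : G) : ∑ χ : G →* Rˣ, MonoidAlgebra.single g (χ g⁻¹ : R) =
      MonoidAlgebra.single g (∑ χ : G →* Rˣ, (χ g⁻¹ : R)) :=
    (map_sum (MonoidAlgebra.singleAddHom g) _ _).symm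
  simp only [twistedNorm]
  rw [Finset.sum_comm, Finset.sum_eq_single 1]
  · rw [← CommGroup.card_monoidHom_of_hasEnoughRootsOfUnity G R, Nat.card_eq_fintype_card]
    simp [MonoidAlgebra.natCast_def]
  · intro g _ hg
    rw [sum_coeff, sum_character_apply_eq_zero (inv_ne_one.mpr hg), MonoidAlgebra.single_zero]
  · simp

end Characters

theorem eq_zero_iff_forall_character_tensor_eq_zero_general
    (R : Type*) [CommRing R] [IsDomain R]
    (G : Type*) [CommGroup G] [Finite G] [HasEnoughRootsOfUnity R (Monoid.exponent G)]
    (M : Type*) [AddCommGroup M] [Module (MonoidAlgebra R G) M]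
    (hM : IsSMulRegular M (Nat.card G)) (x : M) :
    x = 0 ↔ ∀ χ : G →* Rˣ,
      letI : Module (MonoidAlgebra R G) R :=
        Module.compHom R (charAlgHom R G χ).toRingHom
      (x ⊗ₜ[MonoidAlgebra R G] (1 : R) : TensorProduct (MonoidAlgebra R G) M R) = 0 := by
  refine ⟨?_, fun hx => ?_⟩
  · rintro rfl χ
    let : Module (MonoidAlgebra R G) R := Module.compHom R (charAlgHom R G χ).toRingHom
    exact TensorProduct.zero_tmul M (1 : R)
  have := Fintype.ofFinite G
  have := Fintype.ofFinite (G →* Rˣ)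
  have twistedNorm_smul (χ : G →* Rˣ) : twistedNorm χ • x = 0 :=
    smul_eq_zero_of_tmul_one_eq_zero _ (mul_twistedNorm χ) (hx χ)
  have card_smul : Nat.card G • x = 0 := calc
    Nat.card G • x = (∑ χ : G →* Rˣ, twistedNorm χ) • x := by
      rw [sum_twistedNorm, Nat.cast_smul_eq_nsmul]
    _ = 0 := by simp [Finset.sum_smul, twistedNorm_smul]
  exact hM (card_smul.trans (smul_zero _).symm)

/-- Let `K` be an algebraically closed field of characteristic zero, `G` a finite abelian
group, and `M` a flat module over the group algebra `K[G]`.  Then `x ∈ M` is zero if and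
only if, for every group homomorphism `χ : G → Kˣ`, the image of `x` under the canonical
map `M → M ⊗_{K[G]} K_χ`, `x ↦ x ⊗ 1`, is zero; here `K_χ` is `K` viewed as a
`K[G]`-algebra via `φ_χ`. -/
theorem eq_zero_iff_forall_character_tensor_eq_zero
    (K : Type*) [Field K] [IsAlgClosed K] [CharZero K]
    (G : Type*) [CommGroup G] [Fintype G]
    (M : Type*) [AddCommGroup M] [Module (MonoidAlgebra K G) M]
    [Module.Flat (MonoidAlgebra K G) M] (x : M) :
    x = 0 ↔ ∀ χ : G →* Kˣ,
      letI : Module (MonoidAlgebra K G) K :=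
        Module.compHom K (charAlgHom K G χ).toRingHom
      (x ⊗ₜ[MonoidAlgebra K G] (1 : K) : TensorProduct (MonoidAlgebra K G) M K) = 0 :=
  eq_zero_iff_forall_character_tensor_eq_zero_general K G M
    (isSMulRegular_nat_of_algebra_charZero K (MonoidAlgebra K G) Nat.card_pos.ne') x
end

section
/- Let a, b, d be natural numbers with a ≥ 1 satisfying a² = d·b² + 1. Then, in the real numbers, (√((a+1)/2) + √((a−1)/2))² = a + b·√d. -/
lemma sq_sqrt_add_sqrt {x y : ℝ} (hx : 0 ≤ x) (hy : 0 ≤ y) :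
    (√x + √y) ^ 2 = x + y + 2 * √(x * y) := by
  rw [add_sq, Real.sq_sqrt hx, Real.sq_sqrt hy, Real.sqrt_mul hx]
  ring

lemma sq_sqrt_half_add_add_sqrt_half_sub {a c : ℝ} (hc : |c| ≤ a) :
    (√((a + c) / 2) + √((a - c) / 2)) ^ 2 = a + √(a ^ 2 - c ^ 2) := by
  obtain ⟨hneg, hle⟩ := abs_le.mp hc
  have hprod : (a + c) / 2 * ((a - c) / 2) = (a ^ 2 - c ^ 2) / 2 ^ 2 := by ring
  rw [sq_sqrt_add_sqrt (by linarith) (by linarith), hprod, Real.sqrt_div' _ (sq_nonneg 2),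
    Real.sqrt_sq zero_le_two]
  ring

theorem sq_sqrt_add_sqrt_eq_general {a b c d : ℝ} (hc : |c| ≤ a) (hb : 0 ≤ b)
    (h : a ^ 2 = d * b ^ 2 + c ^ 2) :
    (√((a + c) / 2) + √((a - c) / 2)) ^ 2 = a + b * √d := by
  have hsqrt : √(a ^ 2 - c ^ 2) = b * √d := by
    rw [h, add_sub_cancel_right, Real.sqrt_mul' _ (sq_nonneg b), Real.sqrt_sq hb, mul_comm]
  rw [sq_sqrt_half_add_add_sqrt_half_sub hc, hsqrt]

/-- If `a ≥ 1` and `a² = d·b² + 1` for natural numbers `a, b, d`, then in the real numbers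
`(√((a+1)/2) + √((a−1)/2))² = a + b·√d`. -/
theorem sq_sqrt_add_sqrt_eq (a b d : ℕ) (ha : 1 ≤ a) (h : a ^ 2 = d * b ^ 2 + 1) :
    (Real.sqrt (((a : ℝ) + 1) / 2) + Real.sqrt (((a : ℝ) - 1) / 2)) ^ 2
      = (a : ℝ) + (b : ℝ) * Real.sqrt d :=
  sq_sqrt_add_sqrt_eq_general (by simpa using ha) b.cast_nonneg (by rw [one_pow]; exact_mod_cast h)
end
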